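/- Let n ≥ 1, let θ be a bounded measurable function supported in Q = (-1/2,1/2)^n with ∫θ = 1, and let (λ_j)_{j ∈ ℤ^n} be nonnegative real numbers with ∑_{j ∈ ℤ^n} λ_j < ∞. If g = ∑_{j ∈ ℤ^n} λ_j (χ_{Q_j} − θ) belongs to H^1(ℝ^n) (i.e., 𝓜_φ g is integrable for every smooth φ supported in the closed unit ball with ∫φ = 1), then ∑_{j ∈ ℤ^n} λ_j (1 + ln₊|j|) < ∞. -/

import Mathlib

open MeasureTheory Real Set Metric ENNReal

noncomputable section

/-- `ℝ^n` with the Euclidean norm. -/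
abbrev En (n : ℕ) := EuclideanSpace ℝ (Fin n)

/-- `ln₊ t = max (ln t) 0`. -/
def lnp (t : ℝ) : ℝ := max (Real.log t) 0

/-- The unit cube `Q = (-1/2, 1/2)^n`. -/
def unitQ (n : ℕ) : Set (En n) := {x | ∀ i, -(1/2 : ℝ) < x i ∧ x i < 1/2}

/-- The dilate `φ_t(y) = t^{-n} φ(y/t)` convolved with `f` at `x`:
`(φ_t ∗ f)(x) = ∫ t^{-n} φ((x-y)/t) f(y) dy`. -/
def phiConv (n : ℕ) (φ f : En n → ℝ) (t : ℝ) (x : En n) : ℝ :=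
  ∫ y, (t ^ n)⁻¹ * φ (t⁻¹ • (x - y)) * f y

/-- The maximal function `𝓜_φ f(x) = sup_{t>0} |(φ_t ∗ f)(x)|`. -/
def Mphi (n : ℕ) (φ f : En n → ℝ) (x : En n) : ℝ :=
  ⨆ t : {t : ℝ // 0 < t}, |phiConv n φ f t.1 x|

/-- A smooth function supported in the closed unit ball with integral `1`. -/
def IsTestFun (n : ℕ) (φ : En n → ℝ) : Prop :=
  ContDiff ℝ (⊤ : ℕ∞) φ ∧ (∀ x, x ∉ Metric.closedBall (0 : En n) 1 → φ x = 0) ∧ (∫ x, φ x) = 1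

/-- Membership in the Hardy space `H^1(ℝ^n)`: the maximal function `𝓜_φ f` is
integrable for every admissible `φ`. -/
def MemH1 (n : ℕ) (f : En n → ℝ) : Prop :=
  ∀ φ : En n → ℝ, IsTestFun n φ → Integrable (Mphi n φ f)

/-- The cube `Q_k = k + Q` for `k ∈ ℤ^n`. -/
def Qk (n : ℕ) (k : Fin n → ℤ) : Set (En n) :=
  {x | ∀ i, (k i : ℝ) - 1/2 < x i ∧ x i < (k i : ℝ) + 1/2}

/-- The lattice point `k ∈ ℤ^n` viewed as a point of `ℝ^n`. -/
def zv (n : ℕ) (k : Fin n → ℤ) : En n :=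
  (EuclideanSpace.equiv (Fin n) ℝ).symm (fun i => (k i : ℝ))

/-- `μ_k = ‖f_k‖_{L^1} = ∫_{Q_k} |f|`. -/
def muk (n : ℕ) (f : En n → ℝ) (k : Fin n → ℤ) : ℝ := ∫ x in Qk n k, |f x|

/-- The local Hardy–Littlewood maximal function
`M^loc f(x) = sup_{0<r<1} r^{-n} ∫_{|y-x|<r} |f(y)| dy`. -/
def Mloc (n : ℕ) (f : En n → ℝ) (x : En n) : ℝ :=
  ⨆ r : Set.Ioo (0 : ℝ) 1, ((r : ℝ) ^ n)⁻¹ * ∫ y in Metric.ball x (r : ℝ), |f y|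


lemma aux_norm_le (n : ℕ) (hn : 1 ≤ n) (z y : En n)
    (h : ∀ i, z i - 1/2 < y i ∧ y i < z i + 1/2) : ‖y - z‖ ≤ n := by
  have h1 : ‖y - z‖ ^ 2 ≤ (n : ℝ) ^ 2 := by
    rw [EuclideanSpace.real_norm_sq_eq]
    have : ∑ i, ((y - z) i) ^ 2 ≤ ∑ _i : Fin n, (1 : ℝ) := by
      refine Finset.sum_le_sum fun i _ => ?_
      have := h i
      simp only [PiLp.sub_apply]
      nlinarith
    have hn' : (1 : ℝ) ≤ n := by exact_mod_cast hn
    rw [Finset.sum_const, Finset.card_univ, Fintype.card_fin, nsmul_eq_mul, mul_one] at this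
    nlinarith
  exact le_of_sq_le_sq h1 (by positivity)

lemma aux_meas (n : ℕ) (k : Fin n → ℤ) : MeasurableSet (Qk n k) := by
  have : Qk n k = ⋂ i, {x : En n | (k i : ℝ) - 1/2 < x i ∧ x i < (k i : ℝ) + 1/2} := by
    ext x; simp [Qk]
  rw [this]
  refine MeasurableSet.iInter fun i => IsOpen.measurableSet ?_
  have hc : Continuous fun x : En n => x i := by fun_prop
  exact (isOpen_lt continuous_const hc).inter (isOpen_lt hc continuous_const)

lemma aux_vol (n : ℕ) (k : Fin n → ℤ) : volume (Qk n k) = 1 := by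
  have : Qk n k = (WithLp.ofLp : En n → (Fin n → ℝ)) ⁻¹'
      (Set.pi univ fun i => Ioo ((k i : ℝ) - 1/2) ((k i : ℝ) + 1/2)) := by
    ext x; simp [Qk]
  rw [this, (PiLp.volume_preserving_ofLp (Fin n)).measure_preimage
    (MeasurableSet.univ_pi fun i => measurableSet_Ioo).nullMeasurableSet, Real.volume_pi_Ioo]
  have (i : Fin n) : (k i : ℝ) + 1/2 - ((k i : ℝ) - 1/2) = 1 := by ring
  simp only [this]
  simp

/-- the test function -/
lemma aux_phi (n : ℕ) : ∃ (φ : En n → ℝ) (c : ℝ), 0 < c ∧ IsTestFun n φ ∧ Continuous φ ∧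
    Integrable φ ∧ (∀ x, 0 ≤ φ x) ∧ (∀ x, φ x ≤ c) ∧ (∀ x, ‖x‖ ≤ 1/2 → φ x = c) ∧
    (∀ x, 1 < ‖x‖ → φ x = 0) := by
  let b : ContDiffBump (0 : En n) := ⟨1/2, 1, by norm_num, by norm_num⟩
  have hp : 0 < ∫ x, b x := b.integral_pos
  have hz : ∀ x, 1 < ‖x‖ → b.normed volume x = 0 := by
    intro x hx
    rw [b.normed_def, b.zero_of_le_dist (by simpa [b] using hx.le), zero_div]
  refine ⟨b.normed volume, (∫ x, b x)⁻¹, inv_pos.2 hp, ⟨b.contDiff_normed, ?_, b.integral_normed⟩,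
    b.continuous_normed, b.integrable_normed, b.nonneg_normed, ?_, ?_, hz⟩
  · intro x hx
    exact hz x (by simpa using hx)
  · intro x
    rw [b.normed_def, div_eq_mul_inv]
    exact mul_le_of_le_one_left (inv_pos.2 hp).le b.le_one
  · intro x hx
    rw [b.normed_def, b.one_of_mem_closedBall (by simpa [b] using hx), one_div]

lemma aux_psi (n : ℕ) (φ : En n → ℝ) (hφ : Integrable φ) (h1 : ∫ x, φ x = 1)
    (t : ℝ) (ht : 0 < t) (x : En n) :
    Integrable (fun y => (t ^ n)⁻¹ * φ (t⁻¹ • (x - y))) ∧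
      ∫ y, (t ^ n)⁻¹ * φ (t⁻¹ • (x - y)) = 1 := by
  constructor
  · have := (hφ.comp_smul (inv_ne_zero ht.ne')).comp_sub_left x
    exact this.const_mul _
  · rw [integral_const_mul, integral_sub_left_eq_self (fun y => φ (t⁻¹ • y)),
      Measure.integral_comp_inv_smul, h1]
    have : 0 < t ^ n := by positivity
    simp [abs_of_pos ht]
    field_simp

lemma aux_polar (n : ℕ) (hn : 1 ≤ n) (a b : ℝ) (ha : 0 < a) (hb : 0 ≤ b) :
    Integrable (fun x : En n => (Ioc a b).indicator (fun r => (r ^ n)⁻¹) ‖x‖) ∧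
    ∫ x : En n, (Ioc a b).indicator (fun r => (r ^ n)⁻¹) ‖x‖ =
      n * volume.real (ball (0 : En n) 1) * max (Real.log (b / a)) 0 := by
  have : NeZero n := ⟨by omega⟩
  have : Nontrivial (En n) := by
    have : Nonempty (Fin n) := ⟨⟨0, by omega⟩⟩
    infer_instance
  have e : (fun y : ℝ => y ^ (n - 1) • (Ioc a b).indicator (fun r => (r ^ n)⁻¹) y)
      = (Ioc a b).indicator (fun y => y⁻¹) := by
    ext y
    by_cases hy : y ∈ Ioc a b
    · have : 0 < y := ha.trans hy.1
      obtain ⟨m, rfl⟩ : ∃ m, n = m + 1 := ⟨n - 1, by omega⟩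
      simp only [indicator_of_mem hy, smul_eq_mul, Nat.add_sub_cancel]
      field_simp
      ring
    · simp [indicator_of_notMem hy]
  have hs : Ioc a b ∩ Ioi 0 = Ioc a b := by
    apply inter_eq_left.2; intro y hy; exact ha.trans hy.1
  constructor
  · rw [integrable_fun_norm_addHaar volume (f := (Ioc a b).indicator (fun r => (r ^ n)⁻¹))]
    simp only [finrank_euclideanSpace, Fintype.card_fin]
    rw [e, IntegrableOn, integrable_indicator_iff measurableSet_Ioc, IntegrableOn,
      Measure.restrict_restrict measurableSet_Ioc, hs]
    refine (ContinuousOn.integrableOn_compact (isCompact_Icc (a := a) (b := b)) ?_).mono_set Ioc_subset_Icc_self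
    exact ContinuousOn.inv₀ continuousOn_id fun x hx => (ha.trans_le hx.1).ne'
  · rw [integral_fun_norm_addHaar volume ((Ioc a b).indicator (fun r => (r ^ n)⁻¹))]
    simp only [finrank_euclideanSpace, Fintype.card_fin]
    rw [e, setIntegral_indicator measurableSet_Ioc, inter_comm, hs]
    simp only [nsmul_eq_mul, smul_eq_mul, mul_assoc]
    congr 2
    rcases le_total a b with h | h
    · rw [← intervalIntegral.integral_of_le h, integral_inv_of_pos ha (ha.trans_le h), max_eq_left]
      exact Real.log_nonneg ((one_le_div ha).2 h)
    · rw [Ioc_eq_empty (not_lt.2 h), setIntegral_empty, max_eq_right]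
      exact Real.log_nonpos (by positivity) ((div_le_one ha).2 h)

lemma aux_theta_int (n : ℕ) (θ : En n → ℝ) (hθint : (∫ x, θ x) = 1) : Integrable θ := by
  by_contra h
  rw [integral_undef h] at hθint
  norm_num at hθint

/-- upper bound for all averages -/
lemma aux_le_Mphi (n : ℕ) (θ : En n → ℝ) (hθbdd : ∃ C, ∀ x, |θ x| ≤ C)
    (lam : (Fin n → ℤ) → ℝ) (hpos : ∀ j, 0 ≤ lam j) (hsum : Summable lam)
    (φ : En n → ℝ) (hφ : Integrable φ) (h1 : ∫ x, φ x = 1) (h0 : ∀ x, 0 ≤ φ x)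
    (t : ℝ) (ht : 0 < t) (x : En n) :
    |phiConv n φ (fun x => ∑' j : Fin n → ℤ,
      lam j * ((Qk n j).indicator (1 : En n → ℝ) x - θ x)) t x| ≤
    Mphi n φ (fun x => ∑' j : Fin n → ℤ,
      lam j * ((Qk n j).indicator (1 : En n → ℝ) x - θ x)) x := by
  obtain ⟨C, hC⟩ := hθbdd
  refine le_ciSup (f := fun t : {t : ℝ // 0 < t} => |phiConv n φ (fun x => ∑' j : Fin n → ℤ,
      lam j * ((Qk n j).indicator (1 : En n → ℝ) x - θ x)) t.1 x|)
      ⟨∑' j, lam j * (1 + C), ?_⟩ ⟨t, ht⟩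
  rintro _ ⟨⟨s, hs⟩, rfl⟩
  obtain ⟨hi, hi1⟩ := aux_psi n φ hφ h1 s hs x
  have hb : ∀ y, |∑' j : Fin n → ℤ, lam j * ((Qk n j).indicator (1 : En n → ℝ) y - θ y)| ≤
      ∑' j, lam j * (1 + C) := by
    intro y
    rw [← Real.norm_eq_abs]
    refine tsum_of_norm_bounded (hsum.mul_right _).hasSum fun j => ?_
    rw [norm_mul, Real.norm_of_nonneg (hpos j)]
    refine mul_le_mul_of_nonneg_left ?_ (hpos j)
    refine (norm_sub_le _ _).trans (add_le_add ?_ (hC y))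
    refine (norm_indicator_le_norm_self _ _).trans ?_
    simp
  have := norm_integral_le_of_norm_le (f := fun y => (s ^ n)⁻¹ * φ (s⁻¹ • (x - y)) *
    ∑' j : Fin n → ℤ, lam j * ((Qk n j).indicator (1 : En n → ℝ) y - θ y))
    (hi.mul_const (∑' j, lam j * (1 + C))) (Filter.Eventually.of_forall fun y => by
      have hh : 0 ≤ (s ^ n)⁻¹ * φ (s⁻¹ • (x - y)) := mul_nonneg (by positivity) (h0 _)
      rw [norm_mul, Real.norm_of_nonneg hh]
      exact mul_le_mul_of_nonneg_left (hb y) hh)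
  rw [integral_mul_const, hi1, one_mul] at this
  exact this

lemma aux_lower (n : ℕ) (hn : 1 ≤ n) (θ : En n → ℝ)
    (hθsupp : ∀ x, x ∉ unitQ n → θ x = 0) (hθint : (∫ x, θ x) = 1)
    (lam : (Fin n → ℤ) → ℝ) (hpos : ∀ j, 0 ≤ lam j) (hsum : Summable lam)
    (φ : En n → ℝ) (c : ℝ) (hc : 0 < c) (hφc : Continuous φ) (h0 : ∀ x, 0 ≤ φ x)
    (hle : ∀ x, φ x ≤ c) (heq : ∀ x, ‖x‖ ≤ 1/2 → φ x = c) (hz : ∀ x, 1 < ‖x‖ → φ x = 0)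
    (x : En n) (hx : (n : ℝ) < ‖x‖) (S : Finset (Fin n → ℤ)) :
    ∑ j ∈ S, lam j * ((((4 * ‖x‖) ^ n)⁻¹ * c) * if ‖x‖ ≤ ‖zv n j‖ / 8 then 1 else 0) ≤
    |phiConv n φ (fun x => ∑' j : Fin n → ℤ,
      lam j * ((Qk n j).indicator (1 : En n → ℝ) x - θ x)) (4 * ‖x‖) x| := by
  have hn' : (1 : ℝ) ≤ n := by exact_mod_cast hn
  have hθi := aux_theta_int n θ hθint
  set t := 4 * ‖x‖ with ht
  have htp : 0 < t := by linarith
  set ψ : En n → ℝ := fun y => (t ^ n)⁻¹ * φ (t⁻¹ • (x - y)) with hψ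
  set K := (t ^ n)⁻¹ * c with hK
  have hKp : 0 < K := by positivity
  have hψ0 : ∀ y, 0 ≤ ψ y := fun y => mul_nonneg (by positivity) (h0 _)
  have hψK : ∀ y, ψ y ≤ K := fun y => mul_le_mul_of_nonneg_left (hle _) (by positivity)
  have hψc : Continuous ψ := by fun_prop
  have hnorm : ∀ y, ‖t⁻¹ • (x - y)‖ = ‖x - y‖ / t := by
    intro y
    rw [norm_smul, norm_inv, Real.norm_of_nonneg htp.le, div_eq_inv_mul]
  have hψθ : ∀ y, ψ y * θ y = K * θ y := by
    intro y
    by_cases hy : y ∈ unitQ n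
    · have h2 : ‖y - 0‖ ≤ n := aux_norm_le n hn 0 y (fun i => by
        have := hy i
        simp only [PiLp.zero_apply]
        constructor <;> linarith)
      rw [sub_zero] at h2
      have h3 : ‖x - y‖ ≤ t / 2 := by
        have := norm_sub_le x y
        linarith
      simp only [hψ, hK]
      rw [heq _ (by rw [hnorm, div_le_iff₀ htp]; linarith)]
    · simp [hθsupp y hy]
  have hχi : ∀ j, Integrable ((Qk n j).indicator (1 : En n → ℝ)) := by
    intro j
    rw [integrable_indicator_iff (aux_meas n j)]
    exact integrableOn_const (by simp [aux_vol]) 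
  have hχ1 : ∀ j, ∫ y, (Qk n j).indicator (1 : En n → ℝ) y = 1 := by
    intro j
    rw [integral_indicator_one (aux_meas n j), Measure.real, aux_vol]; simp
  have hψχi : ∀ j, Integrable (fun y => ψ y * (Qk n j).indicator (1 : En n → ℝ) y) := by
    intro j
    refine (hχi j).bdd_mul (c := K) hψc.aestronglyMeasurable (Filter.Eventually.of_forall fun y => ?_)
    rw [Real.norm_of_nonneg (hψ0 y)]; exact hψK y
  have hχ0 : ∀ j y, 0 ≤ (Qk n j).indicator (1 : En n → ℝ) y := by
    intro j y
    exact indicator_nonneg (by simp) y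
  set a : (Fin n → ℤ) → ℝ := fun j => ∫ y, ψ y * (Qk n j).indicator (1 : En n → ℝ) y with ha
  have haK : ∀ j, a j ≤ K := by
    intro j
    calc a j ≤ ∫ y, K * (Qk n j).indicator (1 : En n → ℝ) y :=
          integral_mono (hψχi j) ((hχi j).const_mul K)
            fun y => mul_le_mul_of_nonneg_right (hψK y) (hχ0 j y)
      _ = K := by rw [integral_const_mul, hχ1, mul_one]
  have ha0 : ∀ j, ‖x‖ ≤ ‖zv n j‖ / 8 → a j = 0 := by
    intro j hj
    have : (fun y => ψ y * (Qk n j).indicator (1 : En n → ℝ) y) = fun _ => 0 := by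
      ext y
      by_cases hy : y ∈ Qk n j
      · have h2 : ‖y - zv n j‖ ≤ n := aux_norm_le n hn _ y hy
        have h3 : t < ‖x - y‖ := by
          have h4 : ‖zv n j‖ ≤ ‖y‖ + ‖y - zv n j‖ := by
            have := norm_sub_le y (y - zv n j)
            simpa using this
          have h5 : ‖y‖ ≤ ‖x‖ + ‖x - y‖ := by
            have := norm_sub_le x (x - y)
            simpa using this
          linarith
        simp only [hψ]
        rw [hz _ (by rw [hnorm, lt_div_iff₀ htp]; linarith)]
        simp
      · simp [indicator_of_notMem hy]
    simp only [ha, this, integral_zero]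
  let F : (Fin n → ℤ) → En n → ℝ := fun j y =>
    lam j * (ψ y * (Qk n j).indicator (1 : En n → ℝ) y - K * θ y)
  have hFi : ∀ j, Integrable (F j) := fun j =>
    ((hψχi j).sub (hθi.const_mul K)).const_mul (lam j)
  have hFint : ∀ j, ∫ y, F j y = lam j * (a j - K) := by
    intro j
    simp only [F]
    rw [integral_const_mul, integral_sub (hψχi j) (hθi.const_mul K), integral_const_mul, hθint,
      mul_one]
  have hFn : Summable fun j => ∫ y, ‖F j y‖ := by
    refine Summable.of_nonneg_of_le (fun j => integral_nonneg fun y => norm_nonneg _)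
      (fun j => ?_) (hsum.mul_right (K + K * ∫ y, ‖θ y‖))
    calc ∫ y, ‖F j y‖ ≤ ∫ y, lam j * (ψ y * (Qk n j).indicator (1 : En n → ℝ) y + K * ‖θ y‖) := by
          refine integral_mono (hFi j).norm
            (((hψχi j).add (hθi.norm.const_mul K)).const_mul (lam j)) fun y => ?_
          simp only [F]
          rw [norm_mul, Real.norm_of_nonneg (hpos j)]
          refine mul_le_mul_of_nonneg_left ((norm_sub_le _ _).trans (le_of_eq ?_)) (hpos j)
          rw [Real.norm_of_nonneg (mul_nonneg (hψ0 y) (hχ0 j y)), norm_mul,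
            Real.norm_of_nonneg hKp.le]
      _ = lam j * (a j + K * ∫ y, ‖θ y‖) := by
          rw [integral_const_mul, integral_add (hψχi j) (hθi.norm.const_mul K), integral_const_mul]
      _ ≤ _ := mul_le_mul_of_nonneg_left (by linarith [haK j]) (hpos j)
  have hS := hasSum_integral_of_summable_integral_norm hFi hFn
  have hconv : phiConv n φ (fun x => ∑' j : Fin n → ℤ,
      lam j * ((Qk n j).indicator (1 : En n → ℝ) x - θ x)) t x = ∫ y, ∑' j, F j y := by
    unfold phiConv
    congr 1
    ext y
    rw [← tsum_mul_left]
    congr 1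
    ext j
    simp only [F]
    rw [← hψθ y]
    simp only [hψ]
    ring
  rw [hconv]
  simp only [hFint] at hS
  have hS' := hS.neg
  refine le_trans ?_ (neg_le_abs _)
  refine le_trans (Finset.sum_le_sum fun j _ => ?_)
    (sum_le_hasSum S (fun j _ => ?_) hS')
  · rw [← mul_neg]
    refine mul_le_mul_of_nonneg_left ?_ (hpos j)
    split_ifs with h
    · rw [ha0 j h]; simp
    · linarith [haK j]
  · rw [← mul_neg]
    exact mul_nonneg (hpos j) (by linarith [haK j])

/-- **Proposition (necessity for the lattice part).**
If the `λ_j` are nonnegative with `∑_j λ_j < ∞` and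
`g = ∑_j λ_j (χ_{Q_j} - θ)` belongs to `H^1(ℝ^n)`, then
`∑_j λ_j (1 + ln₊|j|) < ∞`. -/
theorem lattice_part_necessary (n : ℕ) (hn : 1 ≤ n) (θ : En n → ℝ)
    (hθmeas : Measurable θ) (hθbdd : ∃ C, ∀ x, |θ x| ≤ C)
    (hθsupp : ∀ x, x ∉ unitQ n → θ x = 0) (hθint : (∫ x, θ x) = 1)
    (lam : (Fin n → ℤ) → ℝ) (hpos : ∀ j, 0 ≤ lam j)
    (hsum : Summable lam)
    (hH1 : MemH1 n (fun x => ∑' j : Fin n → ℤ,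
      lam j * ((Qk n j).indicator (1 : En n → ℝ) x - θ x))) :
    Summable (fun j => lam j * (1 + lnp ‖zv n j‖)) := by
  obtain ⟨φ, c, hc, htest, hφc, hφi, h0, hle, heq, hz⟩ := aux_phi n
  have hint := hH1 φ htest
  set g : En n → ℝ := fun x => ∑' j : Fin n → ℤ,
      lam j * ((Qk n j).indicator (1 : En n → ℝ) x - θ x) with hg
  have hn' : (1 : ℝ) ≤ n := by exact_mod_cast hn
  have hnpos : (0 : ℝ) < n := by linarith
  set V := volume.real (ball (0 : En n) 1) with hV
  have hVp : 0 < V := by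
    rw [hV, Measure.real]
    exact ENNReal.toReal_pos (measure_ball_pos _ _ one_pos).ne' measure_ball_lt_top.ne
  have hM0 : ∀ x, 0 ≤ Mphi n φ g x := fun x => Real.iSup_nonneg fun t => abs_nonneg _
  set D : ℝ := (4 ^ n)⁻¹ * c with hD
  have hDp : 0 < D := by positivity
  let h : (Fin n → ℤ) → En n → ℝ := fun j x =>
    lam j * (D * (Ioc (n : ℝ) (‖zv n j‖ / 8)).indicator (fun r => (r ^ n)⁻¹) ‖x‖)
  have hhi : ∀ j, Integrable (h j) := fun j =>
    ((aux_polar n hn n (‖zv n j‖ / 8) hnpos (by positivity)).1.const_mul D).const_mul (lam j)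
  let L : (Fin n → ℤ) → ℝ := fun j => max (Real.log (‖zv n j‖ / 8 / n)) 0
  have hhint : ∀ j, ∫ x, h j x = lam j * (D * (n * V * L j)) := by
    intro j
    simp only [h]
    rw [integral_const_mul, integral_const_mul,
      (aux_polar n hn n (‖zv n j‖ / 8) hnpos (by positivity)).2]
  have key : ∀ (S : Finset (Fin n → ℤ)) (x : En n), ∑ j ∈ S, h j x ≤ Mphi n φ g x := by
    intro S x
    by_cases hx : (n : ℝ) < ‖x‖
    · have h1 := aux_lower n hn θ hθsupp hθint lam hpos hsum φ c hc hφc h0 hle heq hz x hx S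
      have h2 := aux_le_Mphi n θ hθbdd lam hpos hsum φ hφi htest.2.2 h0 (4 * ‖x‖)
        (by linarith) x
      refine le_trans (le_of_eq ?_) (h1.trans h2)
      refine Finset.sum_congr rfl fun j _ => ?_
      simp only [h, hD]
      by_cases hj : ‖x‖ ≤ ‖zv n j‖ / 8
      · have hm : ‖x‖ ∈ Ioc (n : ℝ) (‖zv n j‖ / 8) := ⟨hx, hj⟩
        rw [indicator_of_mem hm, if_pos hj, mul_pow,
          mul_inv]
        ring
      · rw [indicator_of_notMem (fun hh => hj hh.2), if_neg hj]
        ring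
    · refine le_trans (le_of_eq ?_) (hM0 x)
      refine Finset.sum_eq_zero fun j _ => ?_
      simp only [h]
      rw [indicator_of_notMem (fun hh => hx hh.1)]
      ring
  have hsum1 : Summable fun j => lam j * (D * (n * V * L j)) := by
    refine summable_of_sum_le (c := ∫ x, Mphi n φ g x) (fun j => ?_) (fun S => ?_)
    · have : 0 ≤ L j := le_max_right _ _
      have := hpos j
      positivity
    · simp only [← hhint]
      rw [← integral_finsetSum S fun j _ => hhi j]
      exact integral_mono (integrable_finsetSum S fun j _ => hhi j) hint (key S)
  have hsum2 : Summable fun j => lam j * L j := by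
    refine (hsum1.mul_right (D * (n * V))⁻¹).congr fun j => ?_
    field_simp
  refine Summable.of_nonneg_of_le (fun j => ?_) (fun j => ?_)
    ((hsum.mul_right (1 + Real.log (8 * n))).add hsum2)
  · exact mul_nonneg (hpos j) (add_nonneg zero_le_one (le_max_right _ _))
  · rw [← mul_add]
    refine mul_le_mul_of_nonneg_left ?_ (hpos j)
    have hl : 0 ≤ Real.log (8 * n) := Real.log_nonneg (by linarith)
    have hL0 : 0 ≤ L j := le_max_right _ _
    have : lnp ‖zv n j‖ ≤ Real.log (8 * n) + L j := by
      refine max_le ?_ (by linarith)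
      rcases (norm_nonneg (zv n j)).eq_or_lt with h | h
      · rw [← h, Real.log_zero]; linarith
      · have : Real.log ‖zv n j‖ = Real.log (8 * n) + Real.log (‖zv n j‖ / 8 / n) := by
          rw [← Real.log_mul (by positivity) (by positivity)]
          congr 1
          field_simp
        rw [this]
        exact add_le_add_right (le_max_left _ _) _
    linarith
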